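/- (Monotonicity of the noncentral chi-square CDF in the noncentrality parameter.) For every integer m ≥ 1, all noncentralities 0 ≤ δ ≤ δ′, and every x ∈ ℝ, one has H_m(x; δ′) ≤ H_m(x; δ). -/

import Mathlib

open MeasureTheory

/-- CDF of the central chi-square distribution with `d` degrees of freedom,
i.e. the Gamma distribution with shape `d/2` and rate `1/2`. -/
noncomputable def chiSqCDF (d : ℕ) (x : ℝ) : ℝ :=
  if 0 ≤ x then
    ∫ t in (0 : ℝ)..x,
      ((1 / 2 : ℝ) ^ ((d : ℝ) / 2) / Real.Gamma ((d : ℝ) / 2)) *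
        t ^ ((d : ℝ) / 2 - 1) * Real.exp (-t / 2)
  else 0

/-- CDF of the noncentral chi-square distribution with `m` degrees of freedom and
noncentrality `δ`: `H_m(x; δ) = Σⱼ e^{−δ/2} (δ/2)ʲ/j! · G_{m+2j}(x)`. -/
noncomputable def ncChiSqCDF (m : ℕ) (δ x : ℝ) : ℝ :=
  ∑' j : ℕ, Real.exp (-δ / 2) * (δ / 2) ^ j / (Nat.factorial j) * chiSqCDF (m + 2 * j) x

lemma chiSq_integrable (d : ℕ) (hd : 1 ≤ d) (x : ℝ) :
    IntervalIntegrable (fun t : ℝ => ((1 / 2 : ℝ) ^ ((d : ℝ) / 2) / Real.Gamma ((d : ℝ) / 2)) *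
        t ^ ((d : ℝ) / 2 - 1) * Real.exp (-t / 2)) volume 0 x := by
  have hd' : (1 : ℝ) ≤ d := by exact_mod_cast hd
  have h1 : IntervalIntegrable (fun t : ℝ => t ^ ((d : ℝ) / 2 - 1)) volume 0 x :=
    intervalIntegral.intervalIntegrable_rpow' (by linarith)
  exact (h1.const_mul _).mul_continuousOn (by fun_prop)

lemma chiSqCDF_nonneg (d : ℕ) (hd : 1 ≤ d) (x : ℝ) : 0 ≤ chiSqCDF d x := by
  have hd' : (1 : ℝ) ≤ d := by exact_mod_cast hd
  unfold chiSqCDF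
  split_ifs with hx
  · apply intervalIntegral.integral_nonneg hx
    intro t ht
    have h0 : 0 < Real.Gamma ((d : ℝ) / 2) := Real.Gamma_pos_of_pos (by linarith)
    have h1 := Real.rpow_nonneg ht.1 ((d : ℝ) / 2 - 1)
    positivity
  · exact le_rfl

lemma chiSqCDF_step (d : ℕ) (hd : 1 ≤ d) (x : ℝ) : chiSqCDF (d + 2) x ≤ chiSqCDF d x := by
  have hd' : (1 : ℝ) ≤ d := by exact_mod_cast hd
  unfold chiSqCDF
  split_ifs with hx
  swap
  · exact le_rfl
  have i1 := chiSq_integrable d hd x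
  have i2 := chiSq_integrable (d + 2) (by omega) x
  rw [← sub_nonneg, ← intervalIntegral.integral_sub i1 i2]
  have h0 : 0 < Real.Gamma ((d : ℝ) / 2) := Real.Gamma_pos_of_pos (by linarith)
  have e : (((d + 2 : ℕ) : ℝ) / 2) = (d : ℝ) / 2 + 1 := by push_cast; ring
  have hG : Real.Gamma ((d : ℝ) / 2 + 1) = (d : ℝ) / 2 * Real.Gamma ((d : ℝ) / 2) :=
    Real.Gamma_add_one (by positivity)
  have key := intervalIntegral.integral_eq_sub_of_hasDerivAt_of_le hx
    (f := fun t : ℝ => ((1 / 2 : ℝ) ^ ((d : ℝ) / 2) / Real.Gamma ((d : ℝ) / 2 + 1)) *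
        t ^ ((d : ℝ) / 2) * Real.exp (-t / 2)) ?_ ?_ (i1.sub i2)
  · rw [key]
    have h2 : (0 : ℝ) ^ ((d : ℝ) / 2) = 0 := Real.zero_rpow (by positivity)
    have h1 := Real.rpow_nonneg hx ((d : ℝ) / 2)
    rw [h2, hG]
    simp only [mul_zero, zero_mul, sub_zero]
    positivity
  · have : Continuous (fun t : ℝ => t ^ ((d : ℝ) / 2)) :=
      Real.continuous_rpow_const (by positivity)
    exact Continuous.continuousOn (by fun_prop)
  · intro t ht
    have a1 : HasDerivAt (fun t : ℝ => t ^ ((d : ℝ) / 2))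
        ((d : ℝ) / 2 * t ^ ((d : ℝ) / 2 - 1)) t :=
      Real.hasDerivAt_rpow_const (Or.inl ht.1.ne')
    have a2 : HasDerivAt (fun t : ℝ => Real.exp (-t / 2)) (Real.exp (-t / 2) * (-1 / 2)) t :=
      (((hasDerivAt_id t).neg).div_const 2).exp
    refine ((a1.const_mul
      ((1 / 2 : ℝ) ^ ((d : ℝ) / 2) / Real.Gamma ((d : ℝ) / 2 + 1))).mul a2).congr_deriv ?_
    rw [e, hG, Real.rpow_add (by norm_num), Real.rpow_one, add_sub_cancel_right]
    field_simp
    ring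

lemma poisson_anti (a : ℕ → ℝ) (ha : Antitone a) (h0 : ∀ n, 0 ≤ a n) (l u : ℝ)
    (hl : 0 ≤ l) (hu : 0 ≤ u) :
    ∑' n : ℕ, (l + u) ^ n / n.factorial * a n ≤
      Real.exp u * ∑' n : ℕ, l ^ n / n.factorial * a n := by
  have sl := Real.summable_pow_div_factorial l
  have su := Real.summable_pow_div_factorial u
  have spos : Summable (fun p : ℕ × ℕ =>
      l ^ p.1 / p.1.factorial * (u ^ p.2 / p.2.factorial)) :=
    sl.mul_of_nonneg su (fun _ => by positivity) (fun _ => by positivity)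
  have hF : Summable (fun p : ℕ × ℕ =>
      l ^ p.1 / p.1.factorial * (u ^ p.2 / p.2.factorial) * a (p.1 + p.2)) := by
    refine Summable.of_nonneg_of_le (fun p => ?_) (fun p => ?_) (spos.mul_right (a 0))
    · have := h0 (p.1 + p.2)
      positivity
    · exact mul_le_mul_of_nonneg_left (ha (Nat.zero_le _)) (by positivity)
  have sA : Summable (fun n : ℕ => l ^ n / n.factorial * a n) := by
    refine Summable.of_nonneg_of_le (fun p => ?_) (fun p => ?_) (sl.mul_right (a 0))
    · have := h0 p
      positivity
    · exact mul_le_mul_of_nonneg_left (ha (Nat.zero_le _)) (by positivity)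
  have e1 : ∑' n : ℕ, (l + u) ^ n / n.factorial * a n = ∑' p : ℕ × ℕ,
      l ^ p.1 / p.1.factorial * (u ^ p.2 / p.2.factorial) * a (p.1 + p.2) := by
    rw [← (Finset.HasAntidiagonal.sigmaAntidiagonalEquivProd (A := ℕ)).tsum_eq]
    have hS := (Finset.HasAntidiagonal.sigmaAntidiagonalEquivProd (A := ℕ)).summable_iff.mpr hF
    refine Eq.trans ?_ (Summable.tsum_sigma' (fun n => (hasSum_fintype _).summable) hS).symm
    refine tsum_congr fun n => ?_
    rw [tsum_fintype]
    simp only [Function.comp_apply, Finset.HasAntidiagonal.sigmaAntidiagonalEquivProd_apply]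
    rw [Finset.sum_coe_sort (Finset.HasAntidiagonal.antidiagonal n) (fun p : ℕ × ℕ =>
      l ^ p.1 / p.1.factorial * (u ^ p.2 / p.2.factorial) * a (p.1 + p.2))]
    rw [(Commute.all l u).add_pow', Finset.sum_div, Finset.sum_mul]
    refine Finset.sum_congr rfl fun p hp => ?_
    have hp' := Finset.HasAntidiagonal.mem_antidiagonal.mp hp
    subst hp'
    have hc : ((p.1 + p.2).choose p.1 : ℝ) * p.1.factorial * p.2.factorial
        = (p.1 + p.2).factorial := by
      have h := Nat.add_choose_mul_factorial_mul_factorial p.1 p.2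
      rw [← Nat.choose_symm_add] at h
      exact_mod_cast h
    rw [← hc, nsmul_eq_mul]
    have hpos : ((p.1 + p.2).choose p.1 : ℝ) ≠ 0 := by
      exact_mod_cast (Nat.choose_pos (Nat.le_add_right _ _)).ne'
    field_simp
  have eexp : Real.exp u = ∑' n : ℕ, u ^ n / n.factorial := by
    rw [Real.exp_eq_exp_ℝ, NormedSpace.exp_eq_tsum_div]
  have hfib := hF.prod_factor
  rw [e1, hF.tsum_prod' hfib, ← tsum_mul_left]
  refine Summable.tsum_le_tsum (fun j => ?_) hF.prod (sA.mul_left _)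
  rw [eexp, ← tsum_mul_right]
  refine Summable.tsum_le_tsum (fun k => ?_) (hfib j) (su.mul_right _)
  have := ha (Nat.le_add_right j k)
  calc _ ≤ l ^ j / j.factorial * (u ^ k / k.factorial) * a j :=
        mul_le_mul_of_nonneg_left this (by positivity)
    _ = _ := by ring

/-- **Monotonicity of the noncentral chi-square CDF in the noncentrality parameter:**
for `0 ≤ δ ≤ δ′`, `H_m(x; δ′) ≤ H_m(x; δ)`. -/
theorem ncChiSqCDF_anti_noncentrality (m : ℕ) (hm : 1 ≤ m) (δ δ' : ℝ)
    (hδ : 0 ≤ δ) (hδδ' : δ ≤ δ') (x : ℝ) :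
    ncChiSqCDF m δ' x ≤ ncChiSqCDF m δ x := by
  have ha : Antitone (fun j : ℕ => chiSqCDF (m + 2 * j) x) :=
    antitone_nat_of_succ_le fun n => chiSqCDF_step (m + 2 * n) (by omega) x
  have h0 : ∀ j : ℕ, 0 ≤ chiSqCDF (m + 2 * j) x := fun j => chiSqCDF_nonneg _ (by omega) x
  have key := poisson_anti _ ha h0 (δ / 2) ((δ' - δ) / 2) (by linarith) (by linarith)
  have r : ∀ y : ℝ, ncChiSqCDF m y x = Real.exp (-y / 2) *
      ∑' n : ℕ, (y / 2) ^ n / n.factorial * chiSqCDF (m + 2 * n) x := by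
    intro y
    rw [ncChiSqCDF, ← tsum_mul_left]
    exact tsum_congr fun n => by ring
  rw [r, r]
  have e : δ / 2 + (δ' - δ) / 2 = δ' / 2 := by ring
  rw [e] at key
  have e2 : Real.exp (-δ / 2) = Real.exp (-δ' / 2) * Real.exp ((δ' - δ) / 2) := by
    rw [← Real.exp_add]; ring_nf
  rw [e2, mul_assoc]
  exact mul_le_mul_of_nonneg_left key (Real.exp_pos _).le
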